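/- Let c > 0, ξ ∈ ℝ, and a ∈ (0, c) with ∫₀^{a} (ξ + (c² − a²)/2 − s²)·√((a² − s²)/(c² − s²)) ds = 0, and set m = a/c. Then 24·∫_{a}^{c} (ξ + (c² − a²)/2 − s²)·√((s² − a²)/(c² − s²)) ds = (2πc / K(m)) · (6ξ − c² − a²), where K(m) = ∫₀¹ ((1 − t²)(1 − m²t²))^{−1/2} dt. In particular the phase B(ξ) of the paper satisfies B(ξ) = 2πc(6ξ − c² − a(ξ)²)/K(a(ξ)/c) < 0 for ξ ∈ (−c²/2, c²/3). -/

import Mathlib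

/-!
Write `m = (a / c) ^ 2`, and let `K, E` and `K', E'` be the complete elliptic integrals at `m` and
`1 - m`. The substitutions `s = a sin θ` on `[0, a]` and `s = c Δ(θ)` (at parameter `1 - m`) on
`[a, c]` turn the normalization integral and the phase integral into combinations of `K, E` and of
`K', E'`. With `R = 6ξ - c² - a²` these read
`(c / 6) (R (E - (1 - m) K) + 2 m (1 - m) c² K)` and
`(c / 6) (R (E' - m K') - 2 m (1 - m) c² K')`.
When the first vanishes, adding `K'` times the first to `K` times the second cancels the `c²` terms
and turns the latter into `(c / 6) R` times `E K' + E' K - K K'`, which is `π / 2` by Legendre's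
relation. The vanishing of the first also forces `R < 0`, because `(1 - m) K < E`; as `K > 0`, the
phase is negative.
-/

open Set Filter Topology MeasureTheory Real
open scoped Interval

theorem hasDerivAt_intervalIntegral_of_continuousOn_deriv {𝕜 E : Type*} [RCLike 𝕜]
    [NormedAddCommGroup E] [NormedSpace ℝ E] [NormedSpace 𝕜 E] {F F' : 𝕜 → ℝ → E} {U : Set 𝕜}
    {x₀ : 𝕜} {a b : ℝ} {μ : Measure ℝ} [IsLocallyFiniteMeasure μ] (hU : U ∈ 𝓝 x₀)
    (hF : ∀ x ∈ U, ContinuousOn (F x) [[a, b]])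
    (hF' : ContinuousOn (Function.uncurry F') (U ×ˢ [[a, b]]))
    (hderiv : ∀ x ∈ U, ∀ t ∈ [[a, b]], HasDerivAt (F · t) (F' x t) x) :
    HasDerivAt (fun x ↦ ∫ t in a..b, F x t ∂μ) (∫ t in a..b, F' x₀ t ∂μ) x₀ := by
  obtain ⟨V, hV, hVU, hVc⟩ := local_compact_nhds hU
  obtain ⟨C, hC⟩ := (hVc.prod isCompact_uIcc).exists_bound_of_continuousOn
    (hF'.mono (prod_mono_left hVU))
  have hmeas {f : ℝ → E} (hf : ContinuousOn f [[a, b]]) :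
      AEStronglyMeasurable f (μ.restrict (Ι a b)) :=
    (hf.mono uIoc_subset_uIcc).aestronglyMeasurable measurableSet_uIoc
  have hF'x₀ : ContinuousOn (F' x₀) [[a, b]] :=
    hF'.comp (f := fun t ↦ (x₀, t)) (by fun_prop) fun t ht ↦ ⟨mem_of_mem_nhds hU, ht⟩
  exact (intervalIntegral.hasDerivAt_integral_of_dominated_loc_of_deriv_le hV
    (by filter_upwards [hU] with x hx using hmeas (hF x hx))
    (hF x₀ (mem_of_mem_nhds hU)).intervalIntegrable (hmeas hF'x₀)
    (.of_forall fun t ht x hx ↦ hC (x, t) ⟨hx, uIoc_subset_uIcc ht⟩)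
    intervalIntegrable_const
    (.of_forall fun t ht x hx ↦ hderiv x (hVU hx) t (uIoc_subset_uIcc ht))).2

/-- Legendre's delta amplitude `Δ(θ) = √(1 - m sin²θ)`, as a function of the parameter `m = k²`
(not of the modulus `k`). Where `m sin²θ > 1` the real square root returns `0`, so only `m ≤ 1` is
meaningful. -/
noncomputable def ellipticDelta (m θ : ℝ) : ℝ := √(1 - m * sin θ ^ 2)

/-- The complete elliptic integral of the first kind, as a function of the parameter `m = k²`. -/
noncomputable def ellipticK (m : ℝ) : ℝ := ∫ θ in 0..π / 2, (ellipticDelta m θ)⁻¹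

/-- The complete elliptic integral of the second kind, as a function of the parameter `m = k²`. -/
noncomputable def ellipticE (m : ℝ) : ℝ := ∫ θ in 0..π / 2, ellipticDelta m θ

@[fun_prop]
lemma continuous_uncurry_ellipticDelta : Continuous (Function.uncurry ellipticDelta) := by
  unfold ellipticDelta Function.uncurry
  fun_prop

@[fun_prop]
lemma continuous_ellipticDelta (m : ℝ) : Continuous (ellipticDelta m) := by
  unfold ellipticDelta
  fun_prop

section EllipticIntegrals

variable {m : ℝ}

lemma one_sub_mul_sin_sq_pos (hm : m < 1) (θ : ℝ) : 0 < 1 - m * sin θ ^ 2 := by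
  rcases le_or_gt m 0 with hm₀ | hm₀ <;> nlinarith [sin_sq_le_one θ, sq_nonneg (sin θ)]

lemma ellipticDelta_pos (hm : m < 1) (θ : ℝ) : 0 < ellipticDelta m θ :=
  sqrt_pos.2 (one_sub_mul_sin_sq_pos hm θ)

lemma sq_ellipticDelta (hm : m < 1) (θ : ℝ) : ellipticDelta m θ ^ 2 = 1 - m * sin θ ^ 2 :=
  sq_sqrt (one_sub_mul_sin_sq_pos hm θ).le

lemma sqrt_one_sub_le_ellipticDelta (hm : 0 ≤ m) (θ : ℝ) : √(1 - m) ≤ ellipticDelta m θ :=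
  sqrt_le_sqrt (by nlinarith [sin_sq_le_one θ])

lemma ellipticDelta_le_one (hm : 0 ≤ m) (θ : ℝ) : ellipticDelta m θ ≤ 1 :=
  sqrt_le_one.2 (by nlinarith [sq_nonneg (sin θ)])

lemma continuous_inv_ellipticDelta (hm : m < 1) : Continuous fun θ ↦ (ellipticDelta m θ)⁻¹ :=
  (continuous_ellipticDelta m).inv₀ fun θ ↦ (ellipticDelta_pos hm θ).ne'

lemma hasDerivAt_ellipticDelta (hm : m < 1) (θ : ℝ) :
    HasDerivAt (ellipticDelta m) (-(m * sin θ * cos θ) / ellipticDelta m θ) θ := by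
  have h : HasDerivAt (fun θ ↦ 1 - m * sin θ ^ 2) (-(m * (2 * sin θ * cos θ))) θ := by
    simpa using (((hasDerivAt_sin θ).fun_pow 2).const_mul m).const_sub 1
  refine (h.sqrt (one_sub_mul_sin_sq_pos hm θ).ne').congr_deriv ?_
  rw [← ellipticDelta]
  field_simp

lemma hasDerivAt_ellipticDelta_param (hm : m < 1) (θ : ℝ) :
    HasDerivAt (ellipticDelta · θ) (-sin θ ^ 2 / (2 * ellipticDelta m θ)) m := by
  have h : HasDerivAt (fun m ↦ 1 - m * sin θ ^ 2) (-sin θ ^ 2) m := by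
    simpa using ((hasDerivAt_id m).mul_const (sin θ ^ 2)).const_sub 1
  exact h.sqrt (one_sub_mul_sin_sq_pos hm θ).ne'

lemma hasDerivAt_inv_ellipticDelta_param (hm : m < 1) (θ : ℝ) :
    HasDerivAt (fun m ↦ (ellipticDelta m θ)⁻¹) (sin θ ^ 2 / (2 * ellipticDelta m θ ^ 3)) m := by
  have hΔ := (ellipticDelta_pos hm θ).ne'
  refine ((hasDerivAt_ellipticDelta_param hm θ).inv hΔ).congr_deriv ?_
  field_simp

lemma integral_ellipticDelta_linear_combination (hm : m < 1) (x y z : ℝ) :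
    ∫ θ in 0..π / 2, (x * ellipticDelta m θ ^ 3 + y * ellipticDelta m θ + z * (ellipticDelta m θ)⁻¹)
      = x * (∫ θ in 0..π / 2, ellipticDelta m θ ^ 3) + y * ellipticE m + z * ellipticK m := by
  have := continuous_inv_ellipticDelta hm
  rw [intervalIntegral.integral_add, intervalIntegral.integral_add]
  · simp only [intervalIntegral.integral_const_mul, ellipticE, ellipticK]
  all_goals exact Continuous.intervalIntegrable (by fun_prop) _ _

lemma integral_ellipticDelta_pow_three (hm : m < 1) :
    ∫ θ in 0..π / 2, ellipticDelta m θ ^ 3 =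
      (2 * (2 - m) * ellipticE m - (1 - m) * ellipticK m) / 3 := by
  have hderiv (θ : ℝ) : HasDerivAt (fun θ ↦ m * (sin θ * cos θ * ellipticDelta m θ))
      (3 * ellipticDelta m θ ^ 3 + -(2 * (2 - m)) * ellipticDelta m θ
        + (1 - m) * (ellipticDelta m θ)⁻¹) θ := by
    refine ((((hasDerivAt_sin θ).mul (hasDerivAt_cos θ)).mul
      (hasDerivAt_ellipticDelta hm θ)).const_mul m).congr_deriv ?_
    have hΔ := (ellipticDelta_pos hm θ).ne'
    simp only [Pi.mul_apply]
    field_simp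
    grind [sq_ellipticDelta hm θ, sin_sq_add_cos_sq θ]
  have := continuous_inv_ellipticDelta hm
  have hftc := intervalIntegral.integral_eq_sub_of_hasDerivAt (a := 0) (b := π / 2)
    (fun θ _ ↦ hderiv θ) (Continuous.intervalIntegrable (by fun_prop) _ _)
  rw [integral_ellipticDelta_linear_combination hm] at hftc
  simp only [sin_zero, cos_pi_div_two, mul_zero, zero_mul, sub_zero] at hftc
  linarith

lemma integral_inv_ellipticDelta_pow_three (hm : m < 1) :
    ∫ θ in 0..π / 2, (ellipticDelta m θ)⁻¹ ^ 3 = ellipticE m / (1 - m) := by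
  have hderiv (θ : ℝ) : HasDerivAt (fun θ ↦ m * (sin θ * cos θ * (ellipticDelta m θ)⁻¹))
      (ellipticDelta m θ - (1 - m) * (ellipticDelta m θ)⁻¹ ^ 3) θ := by
    have hΔ := (ellipticDelta_pos hm θ).ne'
    refine ((((hasDerivAt_sin θ).mul (hasDerivAt_cos θ)).mul
      ((hasDerivAt_ellipticDelta hm θ).inv hΔ)).const_mul m).congr_deriv ?_
    simp only [Pi.mul_apply, Pi.inv_apply]
    field_simp
    grind [sq_ellipticDelta hm θ, sin_sq_add_cos_sq θ]
  have := continuous_inv_ellipticDelta hm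
  have hftc := intervalIntegral.integral_eq_sub_of_hasDerivAt (a := 0) (b := π / 2)
    (fun θ _ ↦ hderiv θ) (Continuous.intervalIntegrable (by fun_prop) _ _)
  rw [intervalIntegral.integral_sub (Continuous.intervalIntegrable (by fun_prop) _ _)
    (Continuous.intervalIntegrable (by fun_prop) _ _),
    intervalIntegral.integral_const_mul, ← ellipticE] at hftc
  simp only [sin_zero, cos_pi_div_two, mul_zero, zero_mul, sub_zero] at hftc
  rw [eq_div_iff (sub_pos.2 hm).ne']
  linarith

lemma hasDerivAt_ellipticE_integral (hm : m < 1) :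
    HasDerivAt ellipticE (∫ θ in 0..π / 2, -sin θ ^ 2 / (2 * ellipticDelta m θ)) m :=
  hasDerivAt_intervalIntegral_of_continuousOn_deriv
    (F' := fun m θ ↦ -sin θ ^ 2 / (2 * ellipticDelta m θ)) (Iio_mem_nhds hm)
    (fun x _ ↦ (continuous_ellipticDelta x).continuousOn)
    (ContinuousOn.div (by fun_prop) (by fun_prop)
      fun p hp ↦ (mul_pos two_pos (ellipticDelta_pos hp.1 p.2)).ne')
    fun _ hx θ _ ↦ hasDerivAt_ellipticDelta_param hx θ

lemma hasDerivAt_ellipticK_integral (hm : m < 1) :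
    HasDerivAt ellipticK (∫ θ in 0..π / 2, sin θ ^ 2 / (2 * ellipticDelta m θ ^ 3)) m :=
  hasDerivAt_intervalIntegral_of_continuousOn_deriv
    (F' := fun m θ ↦ sin θ ^ 2 / (2 * ellipticDelta m θ ^ 3)) (Iio_mem_nhds hm)
    (fun _ hx ↦ (continuous_inv_ellipticDelta hx).continuousOn)
    (ContinuousOn.div (by fun_prop) (by fun_prop)
      fun p hp ↦ (mul_pos two_pos (pow_pos (ellipticDelta_pos hp.1 p.2) 3)).ne')
    fun _ hx θ _ ↦ hasDerivAt_inv_ellipticDelta_param hx θ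

lemma hasDerivAt_ellipticE (hm₀ : m ≠ 0) (hm : m < 1) :
    HasDerivAt ellipticE ((ellipticE m - ellipticK m) / (2 * m)) m := by
  have := continuous_inv_ellipticDelta hm
  refine (hasDerivAt_ellipticE_integral hm).congr_deriv ?_
  rw [ellipticE, ellipticK, ← intervalIntegral.integral_sub
    (Continuous.intervalIntegrable (by fun_prop) _ _) (this.intervalIntegrable _ _),
    ← intervalIntegral.integral_div]
  refine intervalIntegral.integral_congr fun θ _ ↦ ?_
  have hΔ := (ellipticDelta_pos hm θ).ne'
  field_simp
  linear_combination -sq_ellipticDelta hm θ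

lemma hasDerivAt_ellipticK (hm₀ : m ≠ 0) (hm : m < 1) :
    HasDerivAt ellipticK ((ellipticE m / (1 - m) - ellipticK m) / (2 * m)) m := by
  have := continuous_inv_ellipticDelta hm
  refine (hasDerivAt_ellipticK_integral hm).congr_deriv ?_
  rw [← integral_inv_ellipticDelta_pow_three hm, ellipticK, ← intervalIntegral.integral_sub
    (Continuous.intervalIntegrable (by fun_prop) _ _) (this.intervalIntegrable _ _),
    ← intervalIntegral.integral_div]
  refine intervalIntegral.integral_congr fun θ _ ↦ ?_
  have hΔ := (ellipticDelta_pos hm θ).ne'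
  field_simp
  linear_combination sq_ellipticDelta hm θ

lemma continuous_ellipticE : Continuous ellipticE :=
  intervalIntegral.continuous_parametric_intervalIntegral_of_continuous' (by fun_prop) _ _

lemma ellipticK_zero : ellipticK 0 = π / 2 := by simp [ellipticK, ellipticDelta]

lemma ellipticE_one : ellipticE 1 = 1 := by
  calc ellipticE 1 = ∫ θ in 0..π / 2, cos θ := by
        refine intervalIntegral.integral_congr fun θ hθ ↦ ?_
        rw [uIcc_of_le (by positivity)] at hθ
        simp [ellipticDelta, cos_eq_sqrt_one_sub_sin_sq (by linarith [hθ.1, pi_pos]) hθ.2]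
    _ = 1 := by simp

lemma ellipticK_pos (hm : m < 1) : 0 < ellipticK m :=
  intervalIntegral.intervalIntegral_pos_of_pos
    ((continuous_inv_ellipticDelta hm).intervalIntegrable _ _)
    (fun θ ↦ inv_pos.2 (ellipticDelta_pos hm θ)) (by positivity)

lemma ellipticK_le (hm₀ : 0 ≤ m) (hm : m < 1) : ellipticK m ≤ π / 2 / √(1 - m) := by
  have hle : ellipticK m ≤ ∫ _ in 0..π / 2, (√(1 - m))⁻¹ :=
    intervalIntegral.integral_mono (by positivity)
      ((continuous_inv_ellipticDelta hm).intervalIntegrable _ _) intervalIntegrable_const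
      fun θ ↦ inv_anti₀ (sqrt_pos.2 (sub_pos.2 hm)) (sqrt_one_sub_le_ellipticDelta hm₀ θ)
  simpa [div_eq_mul_inv] using hle

lemma ellipticE_le_ellipticK (hm₀ : 0 ≤ m) (hm : m < 1) : ellipticE m ≤ ellipticK m :=
  intervalIntegral.integral_mono (by positivity)
    ((continuous_ellipticDelta m).intervalIntegrable _ _)
    ((continuous_inv_ellipticDelta hm).intervalIntegrable _ _) fun θ ↦
      (ellipticDelta_le_one hm₀ θ).trans
        ((one_le_inv₀ (ellipticDelta_pos hm θ)).2 (ellipticDelta_le_one hm₀ θ))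

lemma one_sub_mul_ellipticK_lt_ellipticE (hm₀ : 0 < m) (hm : m < 1) :
    (1 - m) * ellipticK m < ellipticE m := by
  rw [ellipticK, ← intervalIntegral.integral_const_mul]
  refine intervalIntegral.integral_lt_integral_of_continuousOn_of_le_of_exists_lt (by positivity)
    ((continuous_inv_ellipticDelta hm).const_mul _).continuousOn (by fun_prop) (fun θ _ ↦ ?_)
    ⟨0, left_mem_Icc.2 (by positivity), by simpa [ellipticDelta]⟩
  rw [← div_eq_mul_inv, div_le_iff₀ (ellipticDelta_pos hm θ), ← sq, sq_ellipticDelta hm]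
  nlinarith [sin_sq_le_one θ]

end EllipticIntegrals

/-- The left-hand side of Legendre's relation `E K' + E' K - K K' = π / 2`; the prime denotes the
complementary parameter `1 - m`. -/
noncomputable def legendreWronskian (m : ℝ) : ℝ :=
  ellipticE m * ellipticK (1 - m) + ellipticE (1 - m) * ellipticK m
    - ellipticK m * ellipticK (1 - m)

section LegendreRelation

variable {m : ℝ}

lemma hasDerivAt_legendreWronskian (hm : m ∈ Ioo 0 1) : HasDerivAt legendreWronskian 0 m := by
  obtain ⟨hm₀, hm₁⟩ := hm
  have hE := hasDerivAt_ellipticE hm₀.ne' hm₁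
  have hK := hasDerivAt_ellipticK hm₀.ne' hm₁
  have hE' := (hasDerivAt_ellipticE (m := 1 - m) (by linarith) (by linarith)).comp_const_sub 1 m
  have hK' := (hasDerivAt_ellipticK (m := 1 - m) (by linarith) (by linarith)).comp_const_sub 1 m
  refine (((hE.mul hK').add (hE'.mul hK)).sub (hK.mul hK')).congr_deriv ?_
  have : 1 - m ≠ 0 := by linarith
  rw [sub_sub_cancel]
  field_simp
  ring

lemma tendsto_ellipticK_nhdsGT_zero : Tendsto ellipticK (𝓝[>] 0) (𝓝 (π / 2)) := by
  rw [← ellipticK_zero]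
  exact (hasDerivAt_ellipticK_integral one_pos).continuousAt.tendsto.mono_left nhdsWithin_le_nhds

lemma tendsto_ellipticK_sub_ellipticE_mul_ellipticK_one_sub :
    Tendsto (fun m ↦ (ellipticK m - ellipticE m) * ellipticK (1 - m)) (𝓝[>] 0) (𝓝 0) := by
  have hbound : Tendsto (fun m ↦ √m * ellipticK m * (π / 2)) (𝓝[>] 0) (𝓝 0) := by
    have hsqrt : Tendsto sqrt (𝓝[>] 0) (𝓝 0) := by
      simpa using (continuous_sqrt.tendsto 0).mono_left nhdsWithin_le_nhds
    simpa using (hsqrt.mul tendsto_ellipticK_nhdsGT_zero).mul_const (π / 2)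
  have hIoo : Ioo (0 : ℝ) 1 ∈ 𝓝[>] 0 := Ioo_mem_nhdsGT one_pos
  refine squeeze_zero' ?_ ?_ hbound
  · filter_upwards [hIoo] with m ⟨hm₀, hm₁⟩
    exact mul_nonneg (sub_nonneg.2 (ellipticE_le_ellipticK hm₀.le hm₁))
      (ellipticK_pos (by linarith)).le
  · filter_upwards [hIoo] with m ⟨hm₀, hm₁⟩
    have hK := ellipticK_pos hm₁
    calc (ellipticK m - ellipticE m) * ellipticK (1 - m)
        ≤ m * ellipticK m * (π / 2 / √m) := by
          gcongr
          · exact (ellipticK_pos (by linarith)).le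
          · linarith [one_sub_mul_ellipticK_lt_ellipticE hm₀ hm₁]
          · simpa using ellipticK_le (m := 1 - m) (by linarith) (by linarith)
      _ = m / √m * ellipticK m * (π / 2) := by ring
      _ = √m * ellipticK m * (π / 2) := by rw [div_sqrt]

lemma tendsto_legendreWronskian : Tendsto legendreWronskian (𝓝[>] 0) (𝓝 (π / 2)) := by
  have hE' : Tendsto (fun m ↦ ellipticE (1 - m)) (𝓝[>] 0) (𝓝 1) := by
    have : Continuous fun m ↦ ellipticE (1 - m) := continuous_ellipticE.comp (by fun_prop)
    simpa [ellipticE_one] using (this.tendsto 0).mono_left nhdsWithin_le_nhds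
  have h := (hE'.mul tendsto_ellipticK_nhdsGT_zero).sub
    tendsto_ellipticK_sub_ellipticE_mul_ellipticK_one_sub
  rw [one_mul, sub_zero] at h
  exact h.congr fun m ↦ by rw [legendreWronskian]; ring

theorem legendreWronskian_eq (hm : m ∈ Ioo 0 1) : legendreWronskian m = π / 2 := by
  have hconst {x : ℝ} (hx : x ∈ Ioo 0 1) : legendreWronskian m = legendreWronskian x :=
    isOpen_Ioo.is_const_of_deriv_eq_zero isPreconnected_Ioo
      (fun y hy ↦ (hasDerivAt_legendreWronskian hy).differentiableAt.differentiableWithinAt)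
      (fun y hy ↦ (hasDerivAt_legendreWronskian hy).deriv) hm hx
  refine tendsto_nhds_unique (tendsto_const_nhds.congr' ?_) tendsto_legendreWronskian
  filter_upwards [Ioo_mem_nhdsGT one_pos] with x hx using hconst hx

end LegendreRelation

/-- The normalization integral of the `g`-function, with `Q = ξ + (c² - a²) / 2`; its vanishing is
the condition `N(a, ξ) = 0` that determines `a(ξ)`. -/
noncomputable def normalizationIntegral (a c Q : ℝ) : ℝ :=
  ∫ s in 0..a, (Q - s ^ 2) * √((a ^ 2 - s ^ 2) / (c ^ 2 - s ^ 2))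

/-- The integral in the phase function `B(ξ)`, without the factor `24`, with
`Q = ξ + (c² - a²) / 2`. -/
noncomputable def phaseIntegral (a c Q : ℝ) : ℝ :=
  ∫ s in a..c, (Q - s ^ 2) * √((s ^ 2 - a ^ 2) / (c ^ 2 - s ^ 2))

section Phase

variable {c k : ℝ}

lemma sin_pos_and_cos_pos_of_mem_uIoo {θ : ℝ} (hθ : θ ∈ uIoo 0 (π / 2)) :
    0 < sin θ ∧ 0 < cos θ := by
  rw [uIoo_of_le (by positivity)] at hθ
  exact ⟨sin_pos_of_pos_of_lt_pi hθ.1 (by linarith [hθ.2, pi_pos]),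
    cos_pos_of_mem_Ioo ⟨by linarith [hθ.1, pi_pos], hθ.2⟩⟩

lemma integral_inv_sqrt_eq_ellipticK (hk : k ^ 2 < 1) :
    ∫ t in 0..1, (√((1 - t ^ 2) * (1 - k ^ 2 * t ^ 2)))⁻¹ = ellipticK (k ^ 2) := by
  have hsubst := intervalIntegral.integral_comp_mul_deriv_of_deriv_nonneg (a := 0) (b := π / 2)
    (g := fun t ↦ (√((1 - t ^ 2) * (1 - k ^ 2 * t ^ 2)))⁻¹) (by fun_prop)
    (fun θ _ ↦ hasDerivAt_sin θ) (fun θ hθ ↦ (sin_pos_and_cos_pos_of_mem_uIoo hθ).2.le)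
  rw [sin_zero, sin_pi_div_two] at hsubst
  rw [← hsubst, ellipticK]
  refine intervalIntegral.integral_congr_uIoo fun θ hθ ↦ ?_
  have hcos := (sin_pos_and_cos_pos_of_mem_uIoo hθ).2
  have hΔ := ellipticDelta_pos hk θ
  rw [Function.comp_apply, ← cos_sq', ← sq_ellipticDelta hk, ← mul_pow, sqrt_sq (by positivity)]
  field_simp

lemma normalizationIntegral_eq_integral_ellipticDelta (hc : 0 < c) (hk : 0 ≤ k) (hk₁ : k < 1)
    (Q : ℝ) :
    normalizationIntegral (c * k) c Q =
      ∫ θ in 0..π / 2, (c ^ 3 * ellipticDelta (k ^ 2) θ ^ 3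
        + c * (Q - (2 - k ^ 2) * c ^ 2) * ellipticDelta (k ^ 2) θ
        + c * (1 - k ^ 2) * (c ^ 2 - Q) * (ellipticDelta (k ^ 2) θ)⁻¹) := by
  have hsubst := intervalIntegral.integral_comp_mul_deriv_of_deriv_nonneg (a := 0) (b := π / 2)
    (f := fun θ ↦ c * k * sin θ)
    (g := fun s ↦ (Q - s ^ 2) * √(((c * k) ^ 2 - s ^ 2) / (c ^ 2 - s ^ 2))) (by fun_prop)
    (fun θ _ ↦ (hasDerivAt_sin θ).const_mul (c * k))
    (fun θ hθ ↦ mul_nonneg (by positivity) (sin_pos_and_cos_pos_of_mem_uIoo hθ).2.le)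
  simp only [sin_zero, sin_pi_div_two, mul_zero, mul_one] at hsubst
  rw [normalizationIntegral, ← hsubst]
  refine intervalIntegral.integral_congr_uIoo fun θ hθ ↦ ?_
  have hcos := (sin_pos_and_cos_pos_of_mem_uIoo hθ).2
  have hk₂ : k ^ 2 < 1 := by nlinarith
  have hΔ := ellipticDelta_pos hk₂ θ
  have hnum : (c * k) ^ 2 - (c * k * sin θ) ^ 2 = (c * k * cos θ) ^ 2 := by
    rw [mul_pow _ (cos θ), cos_sq']; ring
  have hden : c ^ 2 - (c * k * sin θ) ^ 2 = (c * ellipticDelta (k ^ 2) θ) ^ 2 := by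
    rw [mul_pow _ (ellipticDelta _ _), sq_ellipticDelta hk₂]; ring
  rw [Function.comp_apply, hnum, hden, ← div_pow, sqrt_sq (by positivity)]
  field_simp
  grind [sq_ellipticDelta hk₂ θ, sin_sq_add_cos_sq θ]

lemma phaseIntegral_eq_integral_ellipticDelta (hc : 0 < c) (hk : 0 < k) (hk₁ : k < 1) (Q : ℝ) :
    phaseIntegral (c * k) c Q =
      ∫ θ in 0..π / 2, (-c ^ 3 * ellipticDelta (1 - k ^ 2) θ ^ 3
        + c * (Q + (c * k) ^ 2) * ellipticDelta (1 - k ^ 2) θ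
        + -(c * k ^ 2 * Q) * (ellipticDelta (1 - k ^ 2) θ)⁻¹) := by
  have hm₀ : 0 < 1 - k ^ 2 := by nlinarith
  have hm₁ : 1 - k ^ 2 < 1 := by linarith [pow_pos hk 2]
  have hsubst := intervalIntegral.integral_comp_mul_deriv_of_deriv_nonpos (a := 0) (b := π / 2)
    (f := fun θ ↦ c * ellipticDelta (1 - k ^ 2) θ)
    (g := fun s ↦ (Q - s ^ 2) * √((s ^ 2 - (c * k) ^ 2) / (c ^ 2 - s ^ 2))) (by fun_prop)
    (fun θ _ ↦ (hasDerivAt_ellipticDelta hm₁ θ).const_mul c) (fun θ hθ ↦ by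
      obtain ⟨hsin, hcos⟩ := sin_pos_and_cos_pos_of_mem_uIoo hθ
      have hΔ := ellipticDelta_pos hm₁ θ
      rw [neg_div, mul_neg, neg_nonpos]
      positivity)
  have hΔ_zero : ellipticDelta (1 - k ^ 2) 0 = 1 := by simp [ellipticDelta]
  have hΔ_pi_div_two : ellipticDelta (1 - k ^ 2) (π / 2) = k := by simp [ellipticDelta, hk.le]
  rw [hΔ_zero, hΔ_pi_div_two, mul_one] at hsubst
  rw [phaseIntegral, intervalIntegral.integral_symm, ← hsubst, ← intervalIntegral.integral_neg]
  refine intervalIntegral.integral_congr_uIoo fun θ hθ ↦ ?_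
  obtain ⟨hsin, hcos⟩ := sin_pos_and_cos_pos_of_mem_uIoo hθ
  have hΔ := ellipticDelta_pos hm₁ θ
  have hratio : ((c * ellipticDelta (1 - k ^ 2) θ) ^ 2 - (c * k) ^ 2)
      / (c ^ 2 - (c * ellipticDelta (1 - k ^ 2) θ) ^ 2) = (cos θ / sin θ) ^ 2 := by
    have hnum : (c * ellipticDelta (1 - k ^ 2) θ) ^ 2 - (c * k) ^ 2
        = c ^ 2 * (1 - k ^ 2) * cos θ ^ 2 := by
      rw [mul_pow, sq_ellipticDelta hm₁, cos_sq']; ring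
    have hden : c ^ 2 - (c * ellipticDelta (1 - k ^ 2) θ) ^ 2
        = c ^ 2 * (1 - k ^ 2) * sin θ ^ 2 := by
      rw [mul_pow, sq_ellipticDelta hm₁]; ring
    rw [hnum, hden]
    field_simp
  rw [Function.comp_apply, hratio, sqrt_sq (by positivity)]
  field_simp
  grind [sq_ellipticDelta hm₁ θ, sin_sq_add_cos_sq θ]

/-- Splitting `Q` at `(2 - k²) c² / 3` makes the remaining multiple of `K` agree, up to sign, with
that of `K'` in `phaseIntegral_eq`. -/
lemma normalizationIntegral_eq (hc : 0 < c) (hk : 0 ≤ k) (hk₁ : k < 1) (Q : ℝ) :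
    normalizationIntegral (c * k) c Q =
      c * ((Q - (2 - k ^ 2) * c ^ 2 / 3) * (ellipticE (k ^ 2) - (1 - k ^ 2) * ellipticK (k ^ 2))
        + k ^ 2 * (1 - k ^ 2) * c ^ 2 / 3 * ellipticK (k ^ 2)) := by
  have hk₂ : k ^ 2 < 1 := by nlinarith
  rw [normalizationIntegral_eq_integral_ellipticDelta hc hk hk₁,
    integral_ellipticDelta_linear_combination hk₂, integral_ellipticDelta_pow_three hk₂]
  ring

lemma phaseIntegral_eq (hc : 0 < c) (hk : 0 < k) (hk₁ : k < 1) (Q : ℝ) :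
    phaseIntegral (c * k) c Q =
      c * ((Q - (2 - k ^ 2) * c ^ 2 / 3) *
          (ellipticE (1 - k ^ 2) - k ^ 2 * ellipticK (1 - k ^ 2))
        - k ^ 2 * (1 - k ^ 2) * c ^ 2 / 3 * ellipticK (1 - k ^ 2)) := by
  have hm₁ : 1 - k ^ 2 < 1 := by linarith [pow_pos hk 2]
  rw [phaseIntegral_eq_integral_ellipticDelta hc hk hk₁,
    integral_ellipticDelta_linear_combination hm₁, integral_ellipticDelta_pow_three hm₁]
  ring

lemma phaseIntegral_eq_of_normalizationIntegral_eq_zero (hc : 0 < c) (hk : 0 < k) (hk₁ : k < 1)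
    {Q : ℝ} (hQ : normalizationIntegral (c * k) c Q = 0) :
    phaseIntegral (c * k) c Q =
      π * c / (2 * ellipticK (k ^ 2)) * (Q - (2 - k ^ 2) * c ^ 2 / 3) := by
  have hm : k ^ 2 ∈ Ioo 0 1 := ⟨by positivity, by nlinarith⟩
  have hK := ellipticK_pos hm.2
  have hlegendre := legendreWronskian_eq hm
  rw [legendreWronskian] at hlegendre
  rw [normalizationIntegral_eq hc hk.le hk₁] at hQ
  rw [phaseIntegral_eq hc hk hk₁, div_mul_eq_mul_div (π * c), eq_div_iff (by positivity)]
  linear_combination 2 * c * (Q - (2 - k ^ 2) * c ^ 2 / 3) * hlegendre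
    - 2 * ellipticK (1 - k ^ 2) * hQ

lemma lt_of_normalizationIntegral_eq_zero (hc : 0 < c) (hk : 0 < k) (hk₁ : k < 1)
    {Q : ℝ} (hQ : normalizationIntegral (c * k) c Q = 0) : Q < (2 - k ^ 2) * c ^ 2 / 3 := by
  have hm : 0 < 1 - k ^ 2 := by nlinarith
  have hKE := one_sub_mul_ellipticK_lt_ellipticE (pow_pos hk 2) (sub_pos.1 hm)
  have hK := ellipticK_pos (sub_pos.1 hm)
  rw [normalizationIntegral_eq hc hk.le hk₁, mul_eq_zero_iff_left hc.ne'] at hQ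
  have hpos : 0 < k ^ 2 * (1 - k ^ 2) * c ^ 2 / 3 * ellipticK (k ^ 2) := by positivity
  exact sub_neg.1 (neg_of_mul_neg_left (by linarith) (sub_pos.2 hKE).le)

end Phase


/-- identity (3.2) of Lemma 3.2: under the normalization condition, the phase
`B(ξ) = 24·∫_a^c (ξ + (c² − a²)/2 − s²)·√((s² − a²)/(c² − s²)) ds` equals
`2πc(6ξ − c² − a²)/K(a/c)`; in particular it is negative for `ξ ∈ (−c²/2, c²/3)`. -/
theorem phase_equals_GP_phase (c ξ a : ℝ) (hc : 0 < c) (ha : 0 < a) (hac : a < c)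
    (hnorm : ∫ s in (0:ℝ)..a,
        (ξ + (c ^ 2 - a ^ 2) / 2 - s ^ 2) * Real.sqrt ((a ^ 2 - s ^ 2) / (c ^ 2 - s ^ 2)) = 0) :
    24 * ∫ s in a..c,
        (ξ + (c ^ 2 - a ^ 2) / 2 - s ^ 2) * Real.sqrt ((s ^ 2 - a ^ 2) / (c ^ 2 - s ^ 2))
      = 2 * Real.pi * c /
          (∫ t in (0:ℝ)..1, (Real.sqrt ((1 - t ^ 2) * (1 - (a / c) ^ 2 * t ^ 2)))⁻¹) *
          (6 * ξ - c ^ 2 - a ^ 2) ∧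
    (ξ ∈ Set.Ioo (-c ^ 2 / 2) (c ^ 2 / 3) →
      24 * (∫ s in a..c,
        (ξ + (c ^ 2 - a ^ 2) / 2 - s ^ 2) * Real.sqrt ((s ^ 2 - a ^ 2) / (c ^ 2 - s ^ 2))) < 0) := by
  obtain ⟨k, rfl⟩ : ∃ k, a = c * k := ⟨a / c, by field_simp⟩
  have hk : 0 < k := pos_of_mul_pos_right ha hc.le
  have hk₁ : k < 1 := by nlinarith
  have hk₂ : k ^ 2 < 1 := by nlinarith
  have hR : 6 * ξ - c ^ 2 - (c * k) ^ 2 < 0 := by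
    linarith [lt_of_normalizationIntegral_eq_zero hc hk hk₁ hnorm]
  have hphase := phaseIntegral_eq_of_normalizationIntegral_eq_zero hc hk hk₁ hnorm
  have hB : 24 * phaseIntegral (c * k) c (ξ + (c ^ 2 - (c * k) ^ 2) / 2) =
      2 * π * c / ellipticK (k ^ 2) * (6 * ξ - c ^ 2 - (c * k) ^ 2) := by
    rw [hphase]
    ring
  rw [mul_div_cancel_left₀ k hc.ne', integral_inv_sqrt_eq_ellipticK hk₂, ← phaseIntegral, hB]
  have hK := ellipticK_pos hk₂
  exact ⟨rfl, fun _ ↦ mul_neg_of_pos_of_neg (by positivity) hR⟩
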